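/- Let U = (−1, 1) ⊆ ℝ. Then: (a) for every f ∈ 𝒮(U), the function equal to e^{1/(x²−1)}·f(x) on U and to 0 outside U belongs to 𝒮(U) (i.e. x ↦ e^{1/(x²−1)} is tempered on U); (b) there exists f ∈ 𝒮(U) such that the function equal to e^{1/(1−x²)}·f(x) on U and to 0 outside U does not belong to 𝒮(U) (i.e. the pointwise multiplicative inverse x ↦ e^{1/(1−x²)} is not tempered on U). -/

import Mathlib

/-- `f ∈ 𝒮(U)` for `U ⊆ ℝ`: a Schwartz function on `ℝ` flat at `ℝ \ U`. -/
def SchwartzFlatOn (U : Set ℝ) (f : SchwartzMap ℝ ℝ) : Prop :=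
  ∀ z ∉ U, ∀ k : ℕ, iteratedFDeriv ℝ k (⇑f) z = 0

theorem aux_flat (g : ℝ → ℝ) (hg : ContDiff ℝ ((⊤ : ℕ∞) : WithTop ℕ∞) g)
    (h0 : ∀ x ∉ Set.Ioo (-1 : ℝ) 1, g x = 0) (z : ℝ) (hz : z ∉ Set.Ioo (-1 : ℝ) 1) (k : ℕ) :
    iteratedFDeriv ℝ k g z = 0 := by
  have hc : Continuous (iteratedFDeriv ℝ k g) :=
    hg.continuous_iteratedFDeriv (by exact_mod_cast le_top)
  have hcl : IsClosed {x | iteratedFDeriv ℝ k g x = 0} := isClosed_eq hc continuous_const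
  have hsub : (Set.Iio (-1 : ℝ) ∪ Set.Ioi 1) ⊆ {x | iteratedFDeriv ℝ k g x = 0} := by
    intro x hx
    have ho : IsOpen (Set.Iio (-1 : ℝ) ∪ Set.Ioi 1) := isOpen_Iio.union isOpen_Ioi
    have he : g =ᶠ[nhds x] (fun _ => (0 : ℝ)) := by
      filter_upwards [ho.mem_nhds hx] with y hy
      apply h0
      rintro ⟨h1, h2⟩
      rcases hy with hy | hy
      · exact absurd h1 (not_lt.2 (le_of_lt hy))
      · exact absurd h2 (not_lt.2 (le_of_lt hy))
    have := (he.iteratedFDeriv ℝ k).eq_of_nhds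
    simp only [Set.mem_setOf_eq]
    rw [this]
    exact congrFun iteratedFDeriv_zero_fun x
  have := closure_minimal hsub hcl
  apply this
  rw [closure_union, closure_Iio, closure_Ioi]
  by_contra hcon
  simp only [Set.mem_union, Set.mem_Iic, Set.mem_Ici, not_or, not_le] at hcon
  exact hz hcon

theorem aux_schwartz (g : ℝ → ℝ) (hg : ContDiff ℝ ((⊤ : ℕ∞) : WithTop ℕ∞) g)
    (h0 : ∀ x ∉ Set.Ioo (-1 : ℝ) 1, g x = 0) :
    ∃ G : SchwartzMap ℝ ℝ, (∀ x, G x = g x) ∧ SchwartzFlatOn (Set.Ioo (-1 : ℝ) 1) G := by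
  have hs : HasCompactSupport g := by
    apply HasCompactSupport.intro (isCompact_Icc (a := (-1 : ℝ)) (b := 1))
    intro x hx
    exact h0 x fun h => hx (Set.Ioo_subset_Icc_self h)
  refine ⟨hs.toSchwartzMap hg, fun x => rfl, ?_⟩
  intro z hz k
  exact aux_flat g hg h0 z hz k

theorem aux_phi_contDiff :
    ContDiff ℝ ((⊤ : ℕ∞) : WithTop ℕ∞) (fun x : ℝ => expNegInvGlue (1 - x ^ 2)) :=
  expNegInvGlue.contDiff.comp (by fun_prop)

theorem aux_phi_in (x : ℝ) (hx : x ∈ Set.Ioo (-1 : ℝ) 1) :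
    expNegInvGlue (1 - x ^ 2) = Real.exp (1 / (x ^ 2 - 1)) := by
  have : 0 < 1 - x ^ 2 := by nlinarith [hx.1, hx.2]
  rw [expNegInvGlue, if_neg (not_le.2 this), ← inv_neg, one_div, neg_sub]

theorem aux_phi_out (x : ℝ) (hx : x ∉ Set.Ioo (-1 : ℝ) 1) :
    expNegInvGlue (1 - x ^ 2) = 0 := by
  apply expNegInvGlue.zero_of_nonpos
  by_contra h
  exact hx (abs_lt.1 ((sq_lt_one_iff_abs_lt_one x).1 (by linarith)))


/-- On `U = (-1, 1)`:
(a) `x ↦ e^{1/(x²-1)}` is tempered, i.e. multiplication by it (followed by extension by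
zero) preserves `𝒮(U)`;
(b) its pointwise inverse `x ↦ e^{1/(1-x²)}` is not tempered: there is `f ∈ 𝒮(U)` whose
product with it does not extend by zero to an element of `𝒮(U)`. -/
theorem stmt_14 :
    (∀ f : SchwartzMap ℝ ℝ, SchwartzFlatOn (Set.Ioo (-1 : ℝ) 1) f →
      ∃ g : SchwartzMap ℝ ℝ,
        (∀ x ∈ Set.Ioo (-1 : ℝ) 1, g x = Real.exp (1 / (x ^ 2 - 1)) * f x) ∧
        (∀ x ∉ Set.Ioo (-1 : ℝ) 1, g x = 0) ∧
        SchwartzFlatOn (Set.Ioo (-1 : ℝ) 1) g) ∧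
    (∃ f : SchwartzMap ℝ ℝ, SchwartzFlatOn (Set.Ioo (-1 : ℝ) 1) f ∧
      ¬ ∃ g : SchwartzMap ℝ ℝ,
        (∀ x ∈ Set.Ioo (-1 : ℝ) 1, g x = Real.exp (1 / (1 - x ^ 2)) * f x) ∧
        (∀ x ∉ Set.Ioo (-1 : ℝ) 1, g x = 0) ∧
        SchwartzFlatOn (Set.Ioo (-1 : ℝ) 1) g) := by

  constructor
  · intro f _
    obtain ⟨G, hG, hF⟩ := aux_schwartz (fun x => expNegInvGlue (1 - x ^ 2) * f x)
      (aux_phi_contDiff.mul f.smooth') (fun x hx => by simp only [aux_phi_out x hx, zero_mul])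
    refine ⟨G, fun x hx => ?_, fun x hx => ?_, hF⟩
    · rw [hG, aux_phi_in x hx]
    · rw [hG, aux_phi_out x hx, zero_mul]
  · obtain ⟨G, hG, hF⟩ := aux_schwartz _ aux_phi_contDiff aux_phi_out
    refine ⟨G, hF, ?_⟩
    rintro ⟨g, h1, h2, -⟩
    have hone : Set.Ioo (-1 : ℝ) 1 ⊆ {x | g x = 1} := by
      intro x hx
      have e : 1 / (1 - x ^ 2) + 1 / (x ^ 2 - 1) = 0 := by
        rw [← neg_sub (1 : ℝ) (x ^ 2), one_div_neg_eq_neg_one_div, add_neg_cancel]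
      rw [Set.mem_setOf_eq, h1 x hx, hG, aux_phi_in x hx, ← Real.exp_add, e, Real.exp_zero]
    have hcl : IsClosed {x | g x = 1} := isClosed_eq g.continuous continuous_const
    have h := closure_minimal hone hcl
    rw [closure_Ioo (by norm_num)] at h
    have h3 : g 1 = 1 := h ⟨by norm_num, le_rfl⟩
    rw [h2 1 (by simp)] at h3
    exact zero_ne_one h3
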